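/- Let E be a field, E' a finite field extension of E, and E'' a field extension of E such that the number of E-algebra homomorphisms from E' to E'' equals the degree [E' : E]. Let A be a commutative E''-algebra. Then the map E' ⊗_E A → ∏_{η ∈ Hom_{E-alg}(E', E'')} A, determined on elementary tensors by a ⊗ b ↦ (η(a)·b)_η, is a ring isomorphism (where η(a)·b uses the E''-algebra structure of A). -/

import Mathlib

open TensorProduct

/-
By Dedekind, distinct algebra homomorphisms `S → L` are linearly independent over the field `L`, so
the vectors `(η s)_η` span `L ^ Hom(S, L)`; hence `A ⊗[R] S → A ^ Hom(S, L)` is surjective. When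
there are as many homomorphisms as the rank of `S`, this is a surjection between free `A`-modules
of the same finite rank, and such a map is bijective because `A` is commutative.
-/

section TensorEval

variable (R S L A : Type*) [CommSemiring R] [Semiring S] [Algebra R S]

/-- The evaluation map `A ⊗[R] S → A ^ Hom(S, L)`, `x ⊗ s ↦ (x * η s)_η`, at all `L`-valued points
of `S`. The factor `A` stands on the left so that the map is `A`-linear for Mathlib's left algebra
structure on tensor products. -/
def tensorEvalAlgHom [CommSemiring L] [Algebra R L] [CommSemiring A] [Algebra R A] [Algebra L A]
    [IsScalarTower R L A] : A ⊗[R] S →ₐ[A] ((S →ₐ[R] L) → A) :=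
  AlgHom.pi fun η => Algebra.TensorProduct.lift (AlgHom.id A A)
    ((IsScalarTower.toAlgHom R L A).comp η) fun _ _ => Commute.all _ _

@[simp]
theorem tensorEvalAlgHom_tmul [CommSemiring L] [Algebra R L] [CommSemiring A] [Algebra R A]
    [Algebra L A] [IsScalarTower R L A] (x : A) (s : S) (η : S →ₐ[R] L) :
    tensorEvalAlgHom R S L A (x ⊗ₜ s) η = x * algebraMap L A (η s) :=
  rfl

theorem span_range_algHom_apply_eq_top [Field L] [Algebra R L] [Finite (S →ₐ[R] L)] :
    Submodule.span L (Set.range fun (s : S) (η : S →ₐ[R] L) => η s) = ⊤ :=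
  span_flip_eq_top_iff_linearIndependent.mpr <|
    (linearIndependent_algHom_toLinearMap R S L).map_injOn (LinearMap.ltoFun R S L L)
      DFunLike.coe_injective.injOn

variable [Field L] [Algebra R L] [CommSemiring A] [Algebra R A] [Algebra L A]
  [IsScalarTower R L A] [Finite (S →ₐ[R] L)]

theorem algebraMap_comp_mem_range_tensorEvalAlgHom (v : (S →ₐ[R] L) → L) :
    algebraMap L A ∘ v ∈ (tensorEvalAlgHom R S L A).range := by
  have hv : v ∈ Submodule.span L (Set.range fun (s : S) (η : S →ₐ[R] L) => η s) :=
    span_range_algHom_apply_eq_top R S L ▸ Submodule.mem_top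
  induction hv using Submodule.span_induction with
  | mem v hv =>
    obtain ⟨s, rfl⟩ := hv
    exact ⟨1 ⊗ₜ s, by ext η; simp⟩
  | zero => exact ⟨0, by ext η; simp⟩
  | add v w _ _ hv hw =>
    convert add_mem hv hw using 1
    ext η
    simp
  | smul c v _ hv =>
    convert Subalgebra.smul_mem _ hv (algebraMap L A c) using 1
    ext η
    simp

theorem tensorEvalAlgHom_surjective : Function.Surjective (tensorEvalAlgHom R S L A) := by
  classical
  have := Fintype.ofFinite (S →ₐ[R] L)
  intro y
  have single_mem (η : S →ₐ[R] L) : Pi.single η 1 ∈ (tensorEvalAlgHom R S L A).range := by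
    convert algebraMap_comp_mem_range_tensorEvalAlgHom R S L A (Pi.single η 1) using 1
    ext η'
    simp [Pi.single_apply, apply_ite (algebraMap L A)]
  have mem_range : ∑ η, y η • Pi.single η 1 ∈ (tensorEvalAlgHom R S L A).range :=
    sum_mem fun η _ => Subalgebra.smul_mem _ (single_mem η) (y η)
  rwa [← pi_eq_sum_univ' y] at mem_range

end TensorEval

section Bijective

variable (R S L A : Type*) [CommRing R] [Ring S] [Algebra R S] [Module.Free R S]
  [Module.Finite R S] [Field L] [Algebra R L] [CommRing A] [Algebra R A] [Algebra L A]
  [IsScalarTower R L A]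

theorem tensorEvalAlgHom_bijective (hcard : Nat.card (S →ₐ[R] L) = Module.finrank R S) :
    Function.Bijective (tensorEvalAlgHom R S L A) := by
  have surjective := tensorEvalAlgHom_surjective R S L A
  cases subsingleton_or_nontrivial A
  · have := Module.subsingleton A (A ⊗[R] S)
    exact ⟨Function.injective_of_subsingleton _, surjective⟩
  have := (algebraMap R L).domain_nontrivial
  have := Fintype.ofFinite (S →ₐ[R] L)
  have finrank_eq : Module.finrank A (A ⊗[R] S) = Module.finrank A ((S →ₐ[R] L) → A) := by
    rw [Module.finrank_baseChange, Module.finrank_fintype_fun_eq_card, ← hcard,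
      Nat.card_eq_fintype_card]
  exact OrzechProperty.bijective_of_surjective_of_finrank_le
    (tensorEvalAlgHom R S L A).toLinearMap surjective finrank_eq.le

theorem stmt3_general (hcard : Nat.card (S →ₐ[R] L) = Module.finrank R S) :
    ∃ Φ : (S ⊗[R] A) ≃+* ((S →ₐ[R] L) → A),
      ∀ (s : S) (x : A) (η : S →ₐ[R] L), Φ (s ⊗ₜ[R] x) η = algebraMap L A (η s) * x :=
  ⟨(Algebra.TensorProduct.comm R S A).toRingEquiv.trans
      (RingEquiv.ofBijective _ (tensorEvalAlgHom_bijective R S L A hcard)),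
    fun s x η => (tensorEvalAlgHom_tmul R S L A x s η).trans (mul_comm _ _)⟩

end Bijective

/-- Let `E` be a field, `E'` a finite extension of `E`, and `E''` an extension
of `E` with `|Hom_{E-alg}(E', E'')| = [E' : E]`.  Let `A` be a commutative `E''`-algebra.  Then
the map `E' ⊗_E A → ∏_{η : E' →ₐ[E] E''} A` determined on elementary tensors by
`a ⊗ b ↦ (η(a)·b)_η` is a ring isomorphism. -/
theorem stmt3 (E E' E'' : Type*) [Field E] [Field E'] [Field E'']
    [Algebra E E'] [Algebra E E''] [FiniteDimensional E E']
    (A : Type*) [CommRing A] [Algebra E A] [Algebra E'' A] [IsScalarTower E E'' A]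
    (hcard : Nat.card (E' →ₐ[E] E'') = Module.finrank E E') :
    ∃ Φ : (E' ⊗[E] A) ≃+* ((E' →ₐ[E] E'') → A),
      ∀ (a : E') (b : A) (η : E' →ₐ[E] E''),
        Φ (a ⊗ₜ[E] b) η = algebraMap E'' A (η a) * b :=
  stmt3_general E E' E'' A hcard
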